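/- Let φ be a pure state on A ⊗ B with d_A ≤ d_B whose entanglement entropy satisfies S(φ_A) ≥ log₂ d_A − c for c > 0. Then there exists a maximally entangled pure state Φ on A ⊗ B with fidelity F(φ, Φ) ≥ 1 − √(2c) and trace distance ‖φ − Φ‖₁ ≤ (16c)^{1/4}. -/

import Mathlib

open scoped BigOperators ComplexOrder
open Matrix

noncomputable section

namespace QIT

variable {n : Type*} [Fintype n] [DecidableEq n]

/-- Density matrix of a pure state given by a unit vector. -/
def pureDM (φ : EuclideanSpace ℂ n) : Matrix n n ℂ :=
  Matrix.of fun i j => φ i * (starRingEnd ℂ) (φ j)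

/-- A density matrix: positive semidefinite with unit trace. -/
def DensityMatrix (ρ : Matrix n n ℂ) : Prop := ρ.PosSemidef ∧ ρ.trace = 1

/-- Von Neumann entropy (base 2), via the eigenvalues. -/
def vNEntropy (ρ : Matrix n n ℂ) : ℝ :=
  if h : ρ.IsHermitian then ∑ i, -(h.eigenvalues i * Real.logb 2 (h.eigenvalues i)) else 0

/-- Trace norm of a Hermitian matrix, via eigenvalues. -/
def traceNorm (M : Matrix n n ℂ) : ℝ :=
  if h : M.IsHermitian then ∑ i, |h.eigenvalues i| else 0

/-- Operator (spectral) norm. -/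
def opNorm (M : Matrix n n ℂ) : ℝ := ‖Matrix.toEuclideanCLM (𝕜 := ℂ) M‖

/-- Apply a real function to a Hermitian matrix via the spectral theorem. -/
def hermApply (f : ℝ → ℝ) (M : Matrix n n ℂ) : Matrix n n ℂ :=
  if h : M.IsHermitian then
    (h.eigenvectorUnitary : Matrix n n ℂ) * Matrix.diagonal (fun i => (f (h.eigenvalues i) : ℂ)) *
      (h.eigenvectorUnitary : Matrix n n ℂ)ᴴ
  else 0

/-- Matrix base-2 logarithm of a Hermitian matrix. -/
def mlog2 : Matrix n n ℂ → Matrix n n ℂ := hermApply (Real.logb 2)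

/-- Matrix square root of a positive semidefinite matrix. -/
def msqrt : Matrix n n ℂ → Matrix n n ℂ := hermApply Real.sqrt

/-- Quantum relative entropy `D(ρ‖σ) = Tr ρ (log₂ ρ − log₂ σ)`. -/
def relEnt (ρ σ : Matrix n n ℂ) : ℝ := ((ρ * (mlog2 ρ - mlog2 σ)).trace).re

/-- Uhlmann fidelity `F(ρ,σ) = (Tr √(√ρ σ √ρ))²`. -/
def fidelity (ρ σ : Matrix n n ℂ) : ℝ := (((msqrt (msqrt ρ * σ * msqrt ρ)).trace).re) ^ 2

/-- A projector. -/
def Projector (P : Matrix n n ℂ) : Prop := P.IsHermitian ∧ P * P = P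

variable {dA dB : ℕ}

/-- Partial trace over the second factor. -/
def ptraceB (ρ : Matrix (Fin dA × Fin dB) (Fin dA × Fin dB) ℂ) : Matrix (Fin dA) (Fin dA) ℂ :=
  Matrix.of fun a a' => ∑ b, ρ (a, b) (a', b)

/-- Partial trace over the first factor. -/
def ptraceA (ρ : Matrix (Fin dA × Fin dB) (Fin dA × Fin dB) ℂ) : Matrix (Fin dB) (Fin dB) ℂ :=
  Matrix.of fun b b' => ∑ a, ρ (a, b) (a, b')

/-- Kronecker (tensor) product of operators on the two factors. -/
def kron (P : Matrix (Fin dA) (Fin dA) ℂ) (Q : Matrix (Fin dB) (Fin dB) ℂ) :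
    Matrix (Fin dA × Fin dB) (Fin dA × Fin dB) ℂ :=
  Matrix.of fun x y => P x.1 y.1 * Q x.2 y.2

/-- Partial transpose on the second factor. -/
def ptransposeB (ρ : Matrix (Fin dA × Fin dB) (Fin dA × Fin dB) ℂ) :
    Matrix (Fin dA × Fin dB) (Fin dA × Fin dB) ℂ :=
  Matrix.of fun x y => ρ (x.1, y.2) (y.1, x.2)

/-- Bipartite separability. -/
def Separable (ρ : Matrix (Fin dA × Fin dB) (Fin dA × Fin dB) ℂ) : Prop :=
  ∃ (m : ℕ) (p : Fin m → ℝ) (a : Fin m → Matrix (Fin dA) (Fin dA) ℂ)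
    (b : Fin m → Matrix (Fin dB) (Fin dB) ℂ),
    (∀ l, 0 ≤ p l) ∧ (∑ l, p l = 1) ∧
    (∀ l, (a l).PosSemidef ∧ (a l).trace = 1) ∧
    (∀ l, (b l).PosSemidef ∧ (b l).trace = 1) ∧
    ρ = ∑ l, (p l : ℂ) • kron (a l) (b l)

/-- Entanglement of formation. -/
def EoF (ρ : Matrix (Fin dA × Fin dB) (Fin dA × Fin dB) ℂ) : ℝ :=
  sInf { x : ℝ | ∃ (m : ℕ) (p : Fin m → ℝ) (φ : Fin m → EuclideanSpace ℂ (Fin dA × Fin dB)),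
    (∀ l, 0 ≤ p l) ∧ (∑ l, p l = 1) ∧ (∀ l, ‖φ l‖ = 1) ∧
    (ρ = ∑ l, (p l : ℂ) • pureDM (φ l)) ∧
    x = ∑ l, p l * vNEntropy (ptraceB (pureDM (φ l))) }

end QIT

/-! Write the coefficient matrix of `φ` in polar form as `√φ_A V`. A further polar decomposition
shows that `1 / d_A` has a purification `Φ` with `F(φ, Φ) = F(φ_A, 1 / d_A) = (Tr √φ_A)² / d_A`
(Uhlmann). By weighted AM–GM for the weights `p_i` and the numbers `1 / √p_i`, where `p_i` are the
eigenvalues of `φ_A`, one has `(Tr √φ_A)² ≥ 2 ^ S(φ_A)`, i.e. the Rényi entropy of order `1/2`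
dominates the von Neumann entropy. Hence `F(φ, Φ) ≥ 2 ^ (-c) ≥ 1 - √c`. Finally
`‖φ - Φ‖₁ ≤ 2 √(1 - F(φ, Φ))`, by Cauchy–Schwarz for the at most two nonzero eigenvalues of
`φ - Φ`. -/

namespace QIT

section Isometry

variable {𝕜 E F V : Type*} [RCLike 𝕜]
  [NormedAddCommGroup E] [InnerProductSpace 𝕜 E] [FiniteDimensional 𝕜 E]
  [NormedAddCommGroup F] [InnerProductSpace 𝕜 F] [FiniteDimensional 𝕜 F]
  [AddCommGroup V] [Module 𝕜 V]

lemma nonempty_linearIsometry_of_finrank_le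
    (h : Module.finrank 𝕜 E ≤ Module.finrank 𝕜 F) : Nonempty (E →ₗᵢ[𝕜] F) := by
  let b := (stdOrthonormalBasis 𝕜 E).toBasis
  let e := stdOrthonormalBasis 𝕜 F ∘ Fin.castLE h
  have hb : Orthonormal 𝕜 b := by simp [b]
  have he : Orthonormal 𝕜 e :=
    (stdOrthonormalBasis 𝕜 F).orthonormal.comp _ (Fin.castLE_injective h)
  have hcomp : b.constr 𝕜 e ∘ b = e := funext fun i => b.constr_basis 𝕜 e i
  exact ⟨(b.constr 𝕜 e).isometryOfOrthonormal hb (hcomp.symm ▸ he)⟩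

lemma exists_linearIsometry_map_eq {f : V →ₗ[𝕜] E} {g : V →ₗ[𝕜] F}
    (hfg : ∀ x, ‖f x‖ = ‖g x‖) (h : Module.finrank 𝕜 E ≤ Module.finrank 𝕜 F) :
    ∃ L : E →ₗᵢ[𝕜] F, ∀ x, L (f x) = g x := by
  obtain ⟨ι⟩ := nonempty_linearIsometry_of_finrank_le h
  let k : V →ₗ[𝕜] F := ι.toLinearMap ∘ₗ f
  have hkg : ∀ x, ‖k x‖ = ‖g x‖ := fun x => (ι.norm_map _).trans (hfg x)
  obtain ⟨s, hs⟩ := k.rangeRestrict.exists_rightInverse_of_surjective k.range_rangeRestrict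
  have hks : ∀ y, k (s y) = y := fun y => congrArg Subtype.val (LinearMap.congr_fun hs y)
  let T : LinearMap.range k →ₗᵢ[𝕜] F :=
    ⟨g ∘ₗ s, fun y => by rw [LinearMap.comp_apply, ← hkg, hks, Submodule.coe_norm]⟩
  have hT : ∀ x, T (k.rangeRestrict x) = g x := fun x => by
    have hzero : ‖k (s (k.rangeRestrict x) - x)‖ = 0 := by
      simp [hks]
    rw [hkg, norm_eq_zero, map_sub, sub_eq_zero] at hzero
    exact hzero
  refine ⟨T.extend.comp ι, fun x => ?_⟩
  rw [← hT x, ← T.extend_apply]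
  rfl

lemma norm_toEuclideanLin_sq {m n : Type*} [Fintype m] [Fintype n] [DecidableEq n]
    (A : Matrix m n 𝕜) (v : EuclideanSpace 𝕜 n) :
    (‖toEuclideanLin A v‖ : 𝕜) ^ 2 = inner 𝕜 v (toEuclideanLin (Aᴴ * A) v) := by
  classical
  rw [← inner_self_eq_norm_sq_to_K, toLpLin_mul_same, LinearMap.comp_apply,
    toEuclideanLin_conjTranspose_eq_adjoint, LinearMap.adjoint_inner_right]

lemma exists_isometry_mul_eq_of_gram_eq {k m n : Type*} [Finite k] [Fintype m] [DecidableEq m]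
    [Fintype n] {A : Matrix m k 𝕜} {B : Matrix n k 𝕜} (hAB : Aᴴ * A = Bᴴ * B)
    (h : Fintype.card m ≤ Fintype.card n) :
    ∃ W : Matrix n m 𝕜, Wᴴ * W = 1 ∧ W * A = B := by
  classical
  cases nonempty_fintype k
  have hnorm : ∀ v, ‖toEuclideanLin A v‖ = ‖toEuclideanLin B v‖ := fun v => by
    have hsq := norm_toEuclideanLin_sq A v
    rw [hAB, ← norm_toEuclideanLin_sq B v] at hsq
    exact (sq_eq_sq₀ (norm_nonneg _) (norm_nonneg _)).1 (mod_cast hsq)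
  obtain ⟨L, hL⟩ := exists_linearIsometry_map_eq hnorm (by simpa using h)
  refine ⟨toEuclideanLin.symm L.toLinearMap, ?_, ?_⟩
  · apply toEuclideanLin.injective
    rw [toLpLin_mul_same, toEuclideanLin_conjTranspose_eq_adjoint,
      LinearEquiv.apply_symm_apply, L.adjoint_comp_self', toLpLin_one]
  · apply toEuclideanLin.injective
    rw [toLpLin_mul_same, LinearEquiv.apply_symm_apply]
    exact LinearMap.ext hL

end Isometry

lemma rank_sub_le {K m n : Type*} [Field K] [Fintype n] (A B : Matrix m n K) :
    (A - B).rank ≤ A.rank + B.rank := by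
  have hrange : (A - B).mulVecLin.range ≤ A.mulVecLin.range ⊔ B.mulVecLin.range := by
    rintro _ ⟨v, rfl⟩
    rw [mulVecLin_apply, sub_mulVec]
    exact Submodule.sub_mem_sup ⟨v, rfl⟩ ⟨v, rfl⟩
  exact (Submodule.finrank_mono hrange).trans (Submodule.finrank_add_le_finrank_add_finrank _ _)

section FunctionalCalculus

open scoped MatrixOrder

variable {n : Type*} [Fintype n] [DecidableEq n] {A B : Matrix n n ℂ}

lemma hermApply_eq_cfc (f : ℝ → ℝ) (A : Matrix n n ℂ) : hermApply f A = cfc f A := by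
  by_cases hA : A.IsHermitian
  · rw [hermApply, dif_pos hA, hA.cfc_eq, IsHermitian.cfc, Unitary.conjStarAlgAut_apply]
    rfl
  · rw [hermApply, dif_neg hA, cfc_apply_of_not_predicate (R := ℝ) (p := IsSelfAdjoint) A hA]

lemma trace_hermApply (hA : A.IsHermitian) (f : ℝ → ℝ) :
    (hermApply f A).trace = ∑ i, (f (hA.eigenvalues i) : ℂ) := by
  rw [hermApply, dif_pos hA, trace_mul_comm, ← Matrix.mul_assoc, ← star_eq_conjTranspose,
    Unitary.coe_star_mul_self, Matrix.one_mul, trace_diagonal]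

lemma trace_mul_self_eq_sum_eigenvalues_sq (hA : A.IsHermitian) :
    (A * A).trace = ∑ i, ((hA.eigenvalues i ^ 2 : ℝ) : ℂ) := by
  rw [← trace_hermApply hA (· ^ 2), hermApply_eq_cfc, cfc_pow_id A 2 hA.isSelfAdjoint, sq]

lemma msqrt_eq_cfcSqrt (hA : A.PosSemidef) : msqrt A = CFC.sqrt A := by
  rw [msqrt, hermApply_eq_cfc, CFC.sqrt_eq_real_sqrt A hA.nonneg, cfcₙ_eq_cfc]

lemma msqrt_eq_of_mul_self_eq (hB : B.PosSemidef) (h : B * B = A) : msqrt A = B := by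
  have hA : A.PosSemidef := by
    simpa only [← h, hB.isHermitian.eq] using posSemidef_conjTranspose_mul_self B
  rw [msqrt_eq_cfcSqrt hA, CFC.sqrt_unique h hB.nonneg]

lemma posSemidef_msqrt (hA : A.PosSemidef) : (msqrt A).PosSemidef :=
  msqrt_eq_cfcSqrt hA ▸ (CFC.sqrt_nonneg A).posSemidef

lemma msqrt_mul_msqrt (hA : A.PosSemidef) : msqrt A * msqrt A = A := by
  rw [msqrt_eq_cfcSqrt hA, CFC.sqrt_mul_sqrt_self A hA.nonneg]

lemma msqrt_smul {r : ℝ} (hr : 0 ≤ r) (hA : A.PosSemidef) :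
    msqrt ((r : ℂ) • A) = ((√r : ℝ) : ℂ) • msqrt A := by
  refine msqrt_eq_of_mul_self_eq ((posSemidef_msqrt hA).smul (mod_cast r.sqrt_nonneg)) ?_
  rw [smul_mul_smul_comm, msqrt_mul_msqrt hA]
  norm_cast
  rw [Real.mul_self_sqrt hr]

lemma exists_polar_decomposition {m k : Type*} [Fintype m] [DecidableEq m] [Fintype k]
    (X : Matrix m k ℂ) (h : Fintype.card m ≤ Fintype.card k) :
    ∃ V : Matrix m k ℂ, V * Vᴴ = 1 ∧ X = msqrt (X * Xᴴ) * V := by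
  have hX : (X * Xᴴ).PosSemidef := posSemidef_self_mul_conjTranspose X
  have hsqrt := (posSemidef_msqrt hX).isHermitian.eq
  obtain ⟨W, hW, hWX⟩ := exists_isometry_mul_eq_of_gram_eq (A := msqrt (X * Xᴴ)) (B := Xᴴ)
    (by rw [hsqrt, msqrt_mul_msqrt hX, conjTranspose_conjTranspose]) h
  refine ⟨Wᴴ, by rw [conjTranspose_conjTranspose, hW], ?_⟩
  rw [← hsqrt, ← conjTranspose_mul, hWX, conjTranspose_conjTranspose]

lemma norm_trace_msqrt (hA : A.PosSemidef) : ‖(msqrt A).trace‖ = (msqrt A).trace.re :=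
  (Complex.re_eq_norm.2 (posSemidef_msqrt hA).trace_nonneg).symm

lemma exists_unitary_fidelity_eq (hA : A.PosSemidef) (hB : B.PosSemidef) :
    ∃ U ∈ unitaryGroup n ℂ, fidelity A B = ‖(msqrt B * U * msqrt A).trace‖ ^ 2 := by
  obtain ⟨W, hW, hAB⟩ := exists_polar_decomposition (msqrt A * msqrt B) le_rfl
  have hgram : msqrt A * msqrt B * (msqrt A * msqrt B)ᴴ = msqrt A * B * msqrt A := by
    rw [conjTranspose_mul, (posSemidef_msqrt hA).isHermitian.eq,
      (posSemidef_msqrt hB).isHermitian.eq, ← Matrix.mul_assoc, Matrix.mul_assoc (msqrt A),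
      msqrt_mul_msqrt hB]
  have hpos : (msqrt A * B * msqrt A).PosSemidef := hgram ▸ posSemidef_self_mul_conjTranspose _
  rw [hgram] at hAB
  refine ⟨Wᴴ, Unitary.star_mem (mem_unitaryGroup_iff.2 hW), ?_⟩
  rw [trace_mul_comm, ← Matrix.mul_assoc, hAB, Matrix.mul_assoc, hW, Matrix.mul_one,
    norm_trace_msqrt hpos, fidelity]

end FunctionalCalculus

section PureStates

variable {n : Type*}

lemma pureDM_eq_vecMulVec (φ : EuclideanSpace ℂ n) :
    pureDM φ = vecMulVec φ.ofLp (star φ.ofLp) := rfl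

lemma posSemidef_pureDM [Finite n] (φ : EuclideanSpace ℂ n) : (pureDM φ).PosSemidef :=
  posSemidef_vecMulVec_self_star φ.ofLp

variable [Fintype n]

lemma rank_pureDM_le (φ : EuclideanSpace ℂ n) : (pureDM φ).rank ≤ 1 :=
  rank_vecMulVec_le _ _

lemma trace_pureDM (φ : EuclideanSpace ℂ n) : (pureDM φ).trace = (‖φ‖ : ℂ) ^ 2 := by
  rw [pureDM_eq_vecMulVec, trace_vecMulVec, ← EuclideanSpace.inner_eq_star_dotProduct]
  exact inner_self_eq_norm_sq_to_K φ

lemma pureDM_mul_pureDM (φ ψ : EuclideanSpace ℂ n) :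
    pureDM φ * pureDM ψ = inner ℂ φ ψ • vecMulVec φ.ofLp (star ψ.ofLp) := by
  rw [pureDM_eq_vecMulVec, pureDM_eq_vecMulVec, vecMulVec_mul_vecMulVec, dotProduct_comm,
    ← EuclideanSpace.inner_eq_star_dotProduct, vecMulVec_smul]

lemma trace_pureDM_mul_pureDM (φ ψ : EuclideanSpace ℂ n) :
    (pureDM φ * pureDM ψ).trace = (‖inner ℂ φ ψ‖ : ℂ) ^ 2 := by
  rw [pureDM_mul_pureDM, trace_smul, trace_vecMulVec, ← EuclideanSpace.inner_eq_star_dotProduct,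
    smul_eq_mul, ← inner_conj_symm ψ φ]
  exact RCLike.mul_conj _

lemma trace_pureDM_sub_mul_self {φ ψ : EuclideanSpace ℂ n} (hφ : ‖φ‖ = 1) (hψ : ‖ψ‖ = 1) :
    ((pureDM φ - pureDM ψ) * (pureDM φ - pureDM ψ)).trace =
      ((2 * (1 - ‖inner ℂ φ ψ‖ ^ 2) : ℝ) : ℂ) := by
  simp only [Matrix.sub_mul, Matrix.mul_sub, trace_sub, trace_pureDM_mul_pureDM,
    norm_inner_symm ψ φ, inner_self_eq_norm_sq_to_K, hφ, hψ, RCLike.ofReal_one, one_pow, norm_one]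
  push_cast
  ring

variable [DecidableEq n]

lemma msqrt_pureDM (φ : EuclideanSpace ℂ n) :
    msqrt (pureDM φ) = ((‖φ‖⁻¹ : ℝ) : ℂ) • pureDM φ := by
  refine msqrt_eq_of_mul_self_eq ((posSemidef_pureDM φ).smul (mod_cast by positivity)) ?_
  rcases eq_or_ne φ 0 with rfl | hφ
  · simp [pureDM_eq_vecMulVec]
  · have hnorm : (‖φ‖ : ℂ) ≠ 0 := mod_cast norm_ne_zero_iff.2 hφ
    have hscalar : ((‖φ‖⁻¹ : ℝ) : ℂ) * ((‖φ‖⁻¹ : ℝ) : ℂ) * inner ℂ φ φ = 1 := by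
      rw [show inner ℂ φ φ = (‖φ‖ : ℂ) ^ 2 from inner_self_eq_norm_sq_to_K φ, Complex.ofReal_inv]
      field_simp
    rw [smul_mul_smul_comm, pureDM_mul_pureDM, ← pureDM_eq_vecMulVec, smul_smul, hscalar, one_smul]

lemma trace_msqrt_pureDM (φ : EuclideanSpace ℂ n) : (msqrt (pureDM φ)).trace = ‖φ‖ := by
  rw [msqrt_pureDM, trace_smul, trace_pureDM, smul_eq_mul, ← Complex.ofReal_pow,
    ← Complex.ofReal_mul, sq, ← mul_assoc, inv_mul_mul_self]

lemma mul_pureDM_mul_conjTranspose (M : Matrix n n ℂ) (φ : EuclideanSpace ℂ n) :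
    M * pureDM φ * Mᴴ = pureDM (toEuclideanLin M φ) := by
  rw [pureDM_eq_vecMulVec, pureDM_eq_vecMulVec, mul_vecMulVec, vecMulVec_mul, ← star_mulVec]
  rfl

lemma toEuclideanLin_pureDM (φ ψ : EuclideanSpace ℂ n) :
    toEuclideanLin (pureDM φ) ψ = inner ℂ φ ψ • φ := by
  ext i
  simp [pureDM_eq_vecMulVec, vecMulVec_mulVec, EuclideanSpace.inner_eq_star_dotProduct,
    dotProduct_comm, mul_comm]

lemma fidelity_pureDM (φ ψ : EuclideanSpace ℂ n) :
    fidelity (pureDM φ) (pureDM ψ) = ‖inner ℂ φ ψ‖ ^ 2 := by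
  have hsqrt := (posSemidef_msqrt (posSemidef_pureDM φ)).isHermitian.eq
  have hnorm : ‖toEuclideanLin (msqrt (pureDM φ)) ψ‖ = ‖inner ℂ φ ψ‖ := by
    rcases eq_or_ne φ 0 with rfl | hφ
    · simp [msqrt_pureDM]
    · have : ‖φ‖ ≠ 0 := norm_ne_zero_iff.2 hφ
      rw [msqrt_pureDM, map_smul, LinearMap.smul_apply, toEuclideanLin_pureDM, norm_smul,
        norm_smul, Complex.norm_real, norm_inv, norm_norm]
      field_simp
  have hsandwich : msqrt (pureDM φ) * pureDM ψ * msqrt (pureDM φ) =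
      pureDM (toEuclideanLin (msqrt (pureDM φ)) ψ) := by
    simpa only [hsqrt] using mul_pureDM_mul_conjTranspose (msqrt (pureDM φ)) ψ
  rw [fidelity, hsandwich, trace_msqrt_pureDM, Complex.ofReal_re, hnorm]

lemma traceNorm_sq_le_rank_mul {A : Matrix n n ℂ} (hA : A.IsHermitian) :
    traceNorm A ^ 2 ≤ A.rank * (A * A).trace.re := by
  have hsupport (f : ℝ → ℝ) (hf : f 0 = 0) :
      ∑ i with hA.eigenvalues i ≠ 0, f (hA.eigenvalues i) = ∑ i, f (hA.eigenvalues i) :=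
    Finset.sum_subset (Finset.subset_univ _) fun i _ hi => by simp_all
  have htrace : (A * A).trace.re = ∑ i, hA.eigenvalues i ^ 2 := by
    rw [trace_mul_self_eq_sum_eigenvalues_sq hA, ← Complex.ofReal_sum, Complex.ofReal_re]
  have hcs := sq_sum_le_card_mul_sum_sq (s := {i | hA.eigenvalues i ≠ 0})
    (f := fun i => |hA.eigenvalues i|)
  simp only [sq_abs] at hcs
  rw [hsupport _ abs_zero, hsupport (· ^ 2) (by simp)] at hcs
  rwa [traceNorm, dif_pos hA, htrace, hA.rank_eq_card_non_zero_eigs, Fintype.card_subtype]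

lemma traceNorm_pureDM_sub_pureDM_le {φ ψ : EuclideanSpace ℂ n} (hφ : ‖φ‖ = 1) (hψ : ‖ψ‖ = 1) :
    traceNorm (pureDM φ - pureDM ψ) ≤ 2 * √(1 - fidelity (pureDM φ) (pureDM ψ)) := by
  have hsub : (pureDM φ - pureDM ψ).IsHermitian :=
    (posSemidef_pureDM φ).isHermitian.sub (posSemidef_pureDM ψ).isHermitian
  have hrank : (pureDM φ - pureDM ψ).rank ≤ 2 :=
    (rank_sub_le _ _).trans (add_le_add (rank_pureDM_le φ) (rank_pureDM_le ψ))
  have hinner : ‖inner ℂ φ ψ‖ ≤ 1 := by simpa [hφ, hψ] using norm_inner_le_norm (𝕜 := ℂ) φ ψ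
  have hsq : 0 ≤ 1 - ‖inner ℂ φ ψ‖ ^ 2 := by nlinarith [norm_nonneg (inner ℂ φ ψ)]
  refine abs_le_of_sq_le_sq' ?_ (by positivity) |>.2
  calc traceNorm (pureDM φ - pureDM ψ) ^ 2
      ≤ (pureDM φ - pureDM ψ).rank * (2 * (1 - ‖inner ℂ φ ψ‖ ^ 2)) := by
        simpa only [trace_pureDM_sub_mul_self hφ hψ, Complex.ofReal_re] using
          traceNorm_sq_le_rank_mul hsub
    _ ≤ 2 * (2 * (1 - ‖inner ℂ φ ψ‖ ^ 2)) := by gcongr; exact_mod_cast hrank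
    _ = (2 * √(1 - fidelity (pureDM φ) (pureDM ψ))) ^ 2 := by
      rw [fidelity_pureDM, mul_pow, Real.sq_sqrt hsq]
      ring

end PureStates

section Entropy

lemma two_rpow_entropy_le_sq_sum_sqrt {ι : Type*} [Fintype ι] {p : ι → ℝ}
    (hp : ∀ i, 0 ≤ p i) (hsum : ∑ i, p i = 1) :
    (2 : ℝ) ^ (∑ i, -(p i * Real.logb 2 (p i))) ≤ (∑ i, √(p i)) ^ 2 := by
  have hfactor : ∀ i, (2 : ℝ) ^ (-(p i * Real.logb 2 (p i))) = (((√(p i))⁻¹) ^ p i) ^ 2 := by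
    intro i
    rcases (hp i).eq_or_lt with h0 | hpos
    · simp [← h0]
    · rw [← neg_mul, mul_comm, Real.rpow_mul two_pos.le,
        Real.rpow_logb two_pos (by norm_num) hpos, Real.rpow_neg hpos.le,
        Real.inv_rpow (Real.sqrt_nonneg _), inv_pow,
        Real.rpow_pow_comm (Real.sqrt_nonneg _), Real.sq_sqrt hpos.le]
  have hmean : ∏ i, ((√(p i))⁻¹) ^ p i ≤ ∑ i, p i * (√(p i))⁻¹ :=
    Real.geom_mean_le_arith_mean_weighted _ _ _ (fun i _ => hp i) hsum fun i _ => by positivity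
  calc (2 : ℝ) ^ (∑ i, -(p i * Real.logb 2 (p i)))
      = (∏ i, ((√(p i))⁻¹) ^ p i) ^ 2 := by
        rw [Real.rpow_sum_of_pos two_pos, ← Finset.prod_pow]
        exact Finset.prod_congr rfl fun i _ => hfactor i
    _ ≤ (∑ i, p i * (√(p i))⁻¹) ^ 2 := by gcongr
    _ = (∑ i, √(p i)) ^ 2 := by simp only [← div_eq_mul_inv, Real.div_sqrt]

variable {n : Type*} [Fintype n] [DecidableEq n] {ρ : Matrix n n ℂ}

lemma two_rpow_vNEntropy_le_trace_msqrt_sq (hρ : DensityMatrix ρ) :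
    (2 : ℝ) ^ vNEntropy ρ ≤ (msqrt ρ).trace.re ^ 2 := by
  have hherm := hρ.1.isHermitian
  have hsum : ∑ i, hherm.eigenvalues i = 1 := by
    have htrace := congrArg Complex.re (hherm.trace_eq_sum_eigenvalues.symm.trans hρ.2)
    simpa using htrace
  rw [vNEntropy, dif_pos hherm, msqrt, trace_hermApply hherm, ← Complex.ofReal_sum,
    Complex.ofReal_re]
  exact two_rpow_entropy_le_sq_sum_sqrt hρ.1.eigenvalues_nonneg hsum

lemma fidelity_smul_one {r : ℝ} (hr : 0 ≤ r) (hρ : ρ.PosSemidef) :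
    fidelity ρ ((r : ℂ) • 1) = r * (msqrt ρ).trace.re ^ 2 := by
  rw [fidelity, Matrix.mul_smul, Matrix.mul_one, Matrix.smul_mul, msqrt_mul_msqrt hρ,
    msqrt_smul hr hρ, trace_smul, smul_eq_mul, Complex.re_ofReal_mul, mul_pow, Real.sq_sqrt hr]

lemma two_rpow_neg_le_fidelity_maximallyMixed (hρ : DensityMatrix ρ) {c : ℝ}
    (hS : Real.logb 2 (Fintype.card n) - c ≤ vNEntropy ρ) :
    (2 : ℝ) ^ (-c) ≤ fidelity ρ (((1 / (Fintype.card n : ℝ) : ℝ) : ℂ) • 1) := by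
  have : Nonempty n := not_isEmpty_iff.1 fun _ => by simpa using hρ.2
  have hcard : (0 : ℝ) < Fintype.card n := mod_cast Fintype.card_pos
  rw [fidelity_smul_one (by positivity) hρ.1]
  calc (2 : ℝ) ^ (-c)
      = 1 / Fintype.card n * 2 ^ (Real.logb 2 (Fintype.card n) - c) := by
        rw [sub_eq_add_neg, Real.rpow_add two_pos, Real.rpow_logb two_pos (by norm_num) hcard]
        field_simp
    _ ≤ 1 / Fintype.card n * 2 ^ vNEntropy ρ := by
        gcongr
        exact one_le_two
    _ ≤ 1 / Fintype.card n * (msqrt ρ).trace.re ^ 2 := by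
        gcongr
        exact two_rpow_vNEntropy_le_trace_msqrt_sq hρ

end Entropy

section Bipartite

/-- The coefficient matrix of a bipartite vector: `φ = ∑ a b, coeffMatrix φ a b • |a⟩ ⊗ |b⟩`.
It turns partial traces and inner products of bipartite pure states into matrix products. -/
def coeffMatrix {m n : Type*} : EuclideanSpace ℂ (m × n) ≃ Matrix m n ℂ :=
  (WithLp.equiv 2 _).trans ((Equiv.curry m n ℂ).trans Matrix.of)

lemma inner_eq_trace_coeffMatrix {m n : Type*} [Fintype m] [Fintype n]
    (φ ψ : EuclideanSpace ℂ (m × n)) :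
    inner ℂ φ ψ = (coeffMatrix ψ * (coeffMatrix φ)ᴴ).trace := by
  simp [PiLp.inner_apply, Fintype.sum_prod_type, trace, mul_apply, coeffMatrix]

variable {dA dB : ℕ}

lemma ptraceB_pureDM (φ : EuclideanSpace ℂ (Fin dA × Fin dB)) :
    ptraceB (pureDM φ) = coeffMatrix φ * (coeffMatrix φ)ᴴ := by
  ext a a'
  simp [ptraceB, pureDM, coeffMatrix, mul_apply]

lemma trace_ptraceB (ρ : Matrix (Fin dA × Fin dB) (Fin dA × Fin dB) ℂ) :
    (ptraceB ρ).trace = ρ.trace := by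
  simp [trace, ptraceB, Fintype.sum_prod_type]

lemma trace_ptraceB_pureDM_eq_one_iff {φ : EuclideanSpace ℂ (Fin dA × Fin dB)} :
    (ptraceB (pureDM φ)).trace = 1 ↔ ‖φ‖ = 1 := by
  rw [trace_ptraceB, trace_pureDM]
  norm_cast
  exact pow_eq_one_iff_of_nonneg (norm_nonneg φ) two_ne_zero

lemma posSemidef_ptraceB_pureDM (φ : EuclideanSpace ℂ (Fin dA × Fin dB)) :
    (ptraceB (pureDM φ)).PosSemidef :=
  ptraceB_pureDM φ ▸ posSemidef_self_mul_conjTranspose _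

/-- The attainment half of Uhlmann's theorem: if `√ρ V` is the polar decomposition of the
coefficient matrix of `φ` and `U` is the optimal unitary for `ρ` and `σ`, the purification of `σ`
closest to `φ` has coefficient matrix `√σ U V`. -/
lemma exists_purification_fidelity_eq (hAB : dA ≤ dB) (φ : EuclideanSpace ℂ (Fin dA × Fin dB))
    {σ : Matrix (Fin dA) (Fin dA) ℂ} (hσ : σ.PosSemidef) :
    ∃ ψ : EuclideanSpace ℂ (Fin dA × Fin dB), ptraceB (pureDM ψ) = σ ∧
      fidelity (pureDM φ) (pureDM ψ) = fidelity (ptraceB (pureDM φ)) σ := by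
  have hρ := posSemidef_ptraceB_pureDM φ
  obtain ⟨V, hV, hφV⟩ := exists_polar_decomposition (coeffMatrix φ) (by simpa using hAB)
  rw [← ptraceB_pureDM] at hφV
  obtain ⟨U, hU, hfid⟩ := exists_unitary_fidelity_eq hρ hσ
  set sρ := msqrt (ptraceB (pureDM φ))
  have hsρ : sρᴴ = sρ := (posSemidef_msqrt hρ).isHermitian.eq
  have hsσ : (msqrt σ)ᴴ = msqrt σ := (posSemidef_msqrt hσ).isHermitian.eq
  refine ⟨coeffMatrix.symm (msqrt σ * U * V), ?_, ?_⟩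
  · calc ptraceB (pureDM (coeffMatrix.symm (msqrt σ * U * V)))
        = msqrt σ * U * (V * Vᴴ) * Uᴴ * msqrt σ := by
          simp only [ptraceB_pureDM, Equiv.apply_symm_apply, conjTranspose_mul, hsσ,
            Matrix.mul_assoc]
      _ = msqrt σ * (U * Uᴴ) * msqrt σ := by rw [hV, Matrix.mul_one, Matrix.mul_assoc (msqrt σ)]
      _ = σ := by
          rw [← star_eq_conjTranspose, mem_unitaryGroup_iff.1 hU, Matrix.mul_one,
            msqrt_mul_msqrt hσ]
  · have hinner : inner ℂ φ (coeffMatrix.symm (msqrt σ * U * V)) = (msqrt σ * U * sρ).trace :=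
      calc inner ℂ φ (coeffMatrix.symm (msqrt σ * U * V))
          = (msqrt σ * U * (V * Vᴴ) * sρ).trace := by
            rw [inner_eq_trace_coeffMatrix, Equiv.apply_symm_apply, hφV, conjTranspose_mul, hsρ]
            simp only [Matrix.mul_assoc]
        _ = (msqrt σ * U * sρ).trace := by rw [hV, Matrix.mul_one]
    rw [fidelity_pureDM, hinner, hfid]

end Bipartite

section Numeric

lemma one_sub_sqrt_le_two_rpow_neg {c : ℝ} (hc : 0 ≤ c) : 1 - √c ≤ (2 : ℝ) ^ (-c) := by
  rcases le_total c 1 with hc1 | hc1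
  · have hsqrt : c ≤ √c := Real.le_sqrt_of_sq_le (by nlinarith)
    have hlog : c * Real.log 2 ≤ c := mul_le_of_le_one_right hc (by linarith [Real.log_two_lt_d9])
    have hexp := Real.add_one_le_exp (Real.log 2 * -c)
    rw [Real.rpow_def_of_pos two_pos]
    linarith
  · have hsqrt : 1 ≤ √c := Real.one_le_sqrt.2 hc1
    have hpow : 0 ≤ (2 : ℝ) ^ (-c) := by positivity
    linarith

lemma two_mul_sqrt_sqrt {c : ℝ} (hc : 0 ≤ c) : 2 * √(√c) = (16 * c) ^ ((1 : ℝ) / 4) := by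
  rw [Real.mul_rpow (by norm_num) hc, Real.sqrt_eq_rpow, Real.sqrt_eq_rpow, ← Real.rpow_mul hc,
    show (16 : ℝ) = 2 ^ (4 : ℝ) by norm_num, ← Real.rpow_mul two_pos.le]
  norm_num

end Numeric

end QIT

theorem close_to_maximally_entangled (dA dB : ℕ) (hA : 0 < dA) (hAB : dA ≤ dB)
    (φ : EuclideanSpace ℂ (Fin dA × Fin dB)) (hφ : ‖φ‖ = 1)
    (c : ℝ) (hc : 0 < c)
    (hS : Real.logb 2 dA - c ≤ QIT.vNEntropy (QIT.ptraceB (QIT.pureDM φ))) :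
    ∃ Φ : EuclideanSpace ℂ (Fin dA × Fin dB), ‖Φ‖ = 1 ∧
      QIT.ptraceB (QIT.pureDM Φ) = ((1 / (dA : ℝ) : ℝ) : ℂ) • 1 ∧
      1 - Real.sqrt (2 * c) ≤ QIT.fidelity (QIT.pureDM φ) (QIT.pureDM Φ) ∧
      QIT.traceNorm (QIT.pureDM φ - QIT.pureDM Φ) ≤ (16 * c) ^ ((1 : ℝ) / 4) := by
  have hmixed : (((1 / (dA : ℝ) : ℝ) : ℂ) • (1 : Matrix (Fin dA) (Fin dA) ℂ)).PosSemidef :=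
    PosSemidef.one.smul (mod_cast by positivity)
  obtain ⟨Φ, hΦ, hfid⟩ := QIT.exists_purification_fidelity_eq hAB φ hmixed
  have hΦnorm : ‖Φ‖ = 1 := by
    rw [← QIT.trace_ptraceB_pureDM_eq_one_iff, hΦ]
    simp [hA.ne']
  have hF : 1 - √c ≤ QIT.fidelity (QIT.pureDM φ) (QIT.pureDM Φ) :=
    calc 1 - √c ≤ 2 ^ (-c) := QIT.one_sub_sqrt_le_two_rpow_neg hc.le
      _ ≤ QIT.fidelity (QIT.ptraceB (QIT.pureDM φ)) (((1 / (dA : ℝ) : ℝ) : ℂ) • 1) := by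
        simpa only [Fintype.card_fin] using QIT.two_rpow_neg_le_fidelity_maximallyMixed
          ⟨QIT.posSemidef_ptraceB_pureDM φ, QIT.trace_ptraceB_pureDM_eq_one_iff.2 hφ⟩
          (by simpa only [Fintype.card_fin] using hS)
      _ = QIT.fidelity (QIT.pureDM φ) (QIT.pureDM Φ) := hfid.symm
  refine ⟨Φ, hΦnorm, hΦ, ?_, ?_⟩
  · have hmono : √c ≤ √(2 * c) := Real.sqrt_le_sqrt (by linarith)
    linarith
  · calc QIT.traceNorm (QIT.pureDM φ - QIT.pureDM Φ)
        ≤ 2 * √(1 - QIT.fidelity (QIT.pureDM φ) (QIT.pureDM Φ)) :=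
          QIT.traceNorm_pureDM_sub_pureDM_le hφ hΦnorm
      _ ≤ 2 * √(√c) := by gcongr; linarith
      _ = (16 * c) ^ ((1 : ℝ) / 4) := QIT.two_mul_sqrt_sqrt hc.le

end
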